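/- There exists α > 0 such that lim_{L→∞} P_{unif,L}( L − (T_1(π) + ⋯ + T_{γ_L(π)}(π)) ≥ α log L ) = 0. In words: with probability tending to 1, the final incomplete excursion of the uniform prudent walk has length at most α log L. -/

import Mathlib

open Filter Set

/-- One admissible step of a nearest-neighbour walk on `ℤ²`. -/
def IsStep (s : ℤ × ℤ) : Prop :=
  s = (1, 0) ∨ s = (-1, 0) ∨ s = (0, 1) ∨ s = (0, -1)

/-- The set `Ω_L` of prudent paths of length `L`. -/
def prudentSet (L : ℕ) : Set (Fin (L + 1) → ℤ × ℤ) :=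
  {π | π 0 = (0, 0) ∧ ∀ i : Fin L,
    IsStep (π i.succ - π i.castSucc) ∧
    ∀ k : ℕ, 1 ≤ k → ∀ j : Fin (L + 1), j ≤ i.castSucc →
      π i.castSucc + (k : ℤ) • (π i.succ - π i.castSucc) ≠ π j}

/-- The uniform probability of a set `A` of paths under `P_{unif,L}`. -/
noncomputable def probUnif (L : ℕ) (A : Set (Fin (L + 1) → ℤ × ℤ)) : ℝ :=
  (Nat.card ↥(A ∩ prudentSet L) : ℝ) / (Nat.card ↥(prudentSet L) : ℝ)

/-- Coercion `ℤ² → ℝ²`. -/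
def toR (p : ℤ × ℤ) : ℝ × ℝ := ((p.1 : ℝ), (p.2 : ℝ))

/-- The rescaled interpolated path `π̃^L : [0,1] → ℝ²`. -/
noncomputable def rescaled (L : ℕ) (π : Fin (L + 1) → ℤ × ℤ) (t : ℝ) : ℝ × ℝ :=
  let n : ℕ := ⌊t * L⌋₊
  let p : ℝ × ℝ := toR (π ⟨min n L, by omega⟩)
  let q : ℝ × ℝ := toR (π ⟨min (n + 1) L, by omega⟩)
  (L : ℝ)⁻¹ • (p + (t * L - (n : ℝ)) • (q - p))

/-- Euclidean norm on `ℝ²`. -/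
noncomputable def enorm2 (v : ℝ × ℝ) : ℝ := Real.sqrt (v.1 ^ 2 + v.2 ^ 2)

/-- The four diagonal directions. -/
def evec : ℕ → ℝ × ℝ
  | 1 => (1, 1)
  | 2 => (-1, 1)
  | 3 => (-1, -1)
  | 4 => (1, -1)
  | _ => (0, 0)
/-- `H_t(π)`: the height of the range of `π` up to time `t` (the time is clamped to `L`). -/
noncomputable def heightAt (L : ℕ) (π : Fin (L + 1) → ℤ × ℤ) (t : ℕ) : ℕ :=
  ((Finset.Iic (⟨min t L, by omega⟩ : Fin (L + 1))).image (fun i => (π i).2)).card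

/-- `W_t(π)`: the width of the range of `π` up to time `t` (the time is clamped to `L`). -/
noncomputable def widthAt (L : ℕ) (π : Fin (L + 1) → ℤ × ℤ) (t : ℕ) : ℕ :=
  ((Finset.Iic (⟨min t L, by omega⟩ : Fin (L + 1))).image (fun i => (π i).1)).card

open Classical in
/-- `min{t ∈ (a, L] : f(t) > f(t−1)} − 1`, or `none` if no such time exists. -/
noncomputable def nextTime (L : ℕ) (f : ℕ → ℕ) (a : ℕ) : Option ℕ :=
  if h : ∃ t : ℕ, a < t ∧ t ≤ L ∧ f (t - 1) < f t then some (Nat.find h - 1) else none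

/-- The sequence `s_0 = 0 ≤ s_1 ≤ s_2 ≤ ⋯` of excursion endpoints of `π`
(`s_{2k+1} = ρ_{k+1}` is obtained from the height, `s_{2k+2} = υ_{k+1}` from the width);
`none` encodes the value `+∞`. -/
noncomputable def excTime (L : ℕ) (π : Fin (L + 1) → ℤ × ℤ) : ℕ → Option ℕ
  | 0 => some 0
  | (i + 1) => (excTime L π i).bind fun a =>
      nextTime L (if Even i then heightAt L π else widthAt L π) a

/-- The largest index `i` with `s_i` finite. -/
noncomputable def lastIdx (L : ℕ) (π : Fin (L + 1) → ℤ × ℤ) : ℕ :=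
  sSup {i : ℕ | (excTime L π i).isSome}

/-- The endpoint `s_i` of the `i`-th excursion, where an infinite value is replaced
by `L` (so that the final, possibly incomplete, segment runs up to time `L`). -/
noncomputable def excEnd (L : ℕ) (π : Fin (L + 1) → ℤ × ℤ) (i : ℕ) : ℕ :=
  (excTime L π i).getD L

/-- `T_i(π) = s_i − s_{i−1}`, the length of the `i`-th excursion. -/
noncomputable def excLen (L : ℕ) (π : Fin (L + 1) → ℤ × ℤ) (i : ℕ) : ℕ :=
  excEnd L π i - excEnd L π (i - 1)

/-- The final segment of `π` can be completed into a full excursion by adding a single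
extra step: some one-step prudent extension of `π` has a finite next excursion endpoint. -/
def finalSegmentCompletable (L : ℕ) (π : Fin (L + 1) → ℤ × ℤ) : Prop :=
  ∃ π' : Fin (L + 2) → ℤ × ℤ, (∀ i : Fin (L + 1), π' i.castSucc = π i) ∧
    π' ∈ prudentSet (L + 1) ∧ (excTime (L + 1) π' (lastIdx L π + 1)).isSome

open Classical in
/-- `γ_L(π)`: the number of complete excursions of `π`, counting the final segment when it
can be completed by a single extra step. -/
noncomputable def numExc (L : ℕ) (π : Fin (L + 1) → ℤ × ℤ) : ℕ :=
  lastIdx L π + if finalSegmentCompletable L π then 1 else 0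

/-- `E_i(π) = 1`: the `i`-th excursion crosses the range, i.e. a horizontal (odd `i`)
excursion traverses the full height of the range at its completion time, and a vertical
(even `i`) one the full width. -/
noncomputable def crossesRange (L : ℕ) (π : Fin (L + 1) → ℤ × ℤ) (i : ℕ) : Prop :=
  if i % 2 = 1 then
    ((π ⟨min (excEnd L π i) L, by omega⟩).2 -
        (π ⟨min (excEnd L π (i - 1)) L, by omega⟩).2).natAbs =
      heightAt L π (excEnd L π i) - 1
  else
    ((π ⟨min (excEnd L π i) L, by omega⟩).1 -
        (π ⟨min (excEnd L π (i - 1)) L, by omega⟩).1).natAbs =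
      widthAt L π (excEnd L π i) - 1

/-!
Cut a prudent path at the start of its last, incomplete excursion. The first piece ends at a corner
of its range. The second one never takes one of the four steps: each row (or column) it meets has
already been visited, on one fixed side of it, so a step towards that side is not prudent. It is
therefore a partially directed walk, and there are of order `(1 + √2) ^ n` of these of length `n`.

A prudent walk ending at a corner, say north-east, can on the other hand be continued by
exponentially more words: by any concatenation of blocks, each made of the detour N, W, N, E, a step
to the east, and a partially directed walk ending at its maximal height. The step W shows where the
blocks begin. Cutting a partially directed walk at its maximum shows that the generating function of
those ending at their maximum diverges at `1 / (1 + √2)`, so that by renewal the concatenations grow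
at a rate `σ > 1 + √2`. Hence the last piece has length at least `N` with probability
`O(((1 + √2) / σ) ^ N)`, uniformly in `L`.
-/

section ChainWords

variable {α : Type*} [Fintype α] [DecidableEq α] (r : α → α → Prop) [DecidableRel r]

/-- The words of length `n` that may follow the letter `a` when any two consecutive letters have to
be related by `r`. -/
def chainWords : ℕ → α → Finset (List α)
  | 0, _ => {[]}
  | n + 1, a => ({b | r a b} : Finset α).biUnion fun b => (chainWords n b).image (List.cons b)

theorem mem_chainWords {n : ℕ} {a : α} {w : List α} :
    w ∈ chainWords r n a ↔ w.length = n ∧ (a :: w).IsChain r := by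
  induction n generalizing a w with
  | zero =>
    simp only [chainWords, Finset.mem_singleton, List.length_eq_zero_iff]
    exact ⟨by rintro rfl; simp, And.left⟩
  | succ n ih =>
    cases w with
    | nil => simp [chainWords]
    | cons b w => simp [chainWords, ih, List.isChain_cons_cons, and_left_comm]

theorem card_chainWords_succ (n : ℕ) (a : α) :
    (chainWords r (n + 1) a).card = ∑ b with r a b, (chainWords r n b).card := by
  rw [chainWords, Finset.card_biUnion]
  · exact Finset.sum_congr rfl fun b _ => Finset.card_image_of_injective _ List.cons_injective
  · intro b _ c _ hbc
    simp only [Function.onFun, Finset.disjoint_left, Finset.mem_image, not_exists, not_and]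
    rintro _ ⟨u, _, rfl⟩ v _ h
    exact hbc (List.cons.inj h).1.symm

theorem card_chainWords_le {v : α → ℝ} {μ : ℝ} (hv : ∀ a, 1 ≤ v a)
    (hμ : ∀ a, ∑ b with r a b, v b = μ * v a) (n : ℕ) (a : α) :
    ((chainWords r n a).card : ℝ) ≤ μ ^ n * v a := by
  induction n generalizing a with
  | zero => simpa [chainWords] using hv a
  | succ n ih =>
    calc ((chainWords r (n + 1) a).card : ℝ)
        ≤ ∑ b with r a b, μ ^ n * v b := by
          rw [card_chainWords_succ]
          push_cast
          exact Finset.sum_le_sum fun b _ => ih b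
      _ = μ ^ (n + 1) * v a := by rw [← Finset.mul_sum, hμ, pow_succ, mul_assoc]

theorem le_card_chainWords {v : α → ℝ} {μ C : ℝ} (hv : ∀ a, v a ≤ C)
    (hμ : ∀ a, ∑ b with r a b, v b = μ * v a) (n : ℕ) (a : α) :
    μ ^ n * v a ≤ C * (chainWords r n a).card := by
  induction n generalizing a with
  | zero => simpa [chainWords] using hv a
  | succ n ih =>
    calc μ ^ (n + 1) * v a = ∑ b with r a b, μ ^ n * v b := by
          rw [← Finset.mul_sum, hμ, pow_succ, mul_assoc]
      _ ≤ C * (chainWords r (n + 1) a).card := by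
          rw [card_chainWords_succ]
          push_cast
          rw [Finset.mul_sum]
          exact Finset.sum_le_sum fun b _ => ih b

end ChainWords

theorem le_sq_sum_range_of_one_le_sum_antidiagonal {f : ℕ → ℝ} (hf : ∀ n, 0 ≤ f n)
    (h : ∀ n, 1 ≤ ∑ p ∈ Finset.HasAntidiagonal.antidiagonal n, f p.1 * f p.2) (M : ℕ) :
    (M : ℝ) ≤ (∑ k ∈ Finset.range M, f k) ^ 2 := by
  calc (M : ℝ) = ∑ _n ∈ Finset.range M, (1 : ℝ) := by simp
    _ ≤ ∑ n ∈ Finset.range M, ∑ p ∈ Finset.HasAntidiagonal.antidiagonal n, f p.1 * f p.2 :=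
        Finset.sum_le_sum fun n _ => h n
    _ = ∑ q ∈ (Finset.range M).sigma Finset.HasAntidiagonal.antidiagonal, f q.2.1 * f q.2.2 := by
        rw [Finset.sum_sigma]
    _ = ∑ p ∈ (Finset.range M ×ˢ Finset.range M) with p.1 + p.2 < M, f p.1 * f p.2 := by
        refine Finset.sum_bij' (fun q _ => q.2) (fun p _ => ⟨p.1 + p.2, p⟩) ?_ ?_ ?_ ?_ ?_ <;>
          simp +contextual
        omega
    _ ≤ ∑ p ∈ Finset.range M ×ˢ Finset.range M, f p.1 * f p.2 :=
        Finset.sum_le_sum_of_subset_of_nonneg (Finset.filter_subset _ _)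
          fun p _ _ => mul_nonneg (hf _) (hf _)
    _ = (∑ k ∈ Finset.range M, f k) ^ 2 := by rw [sq, Finset.sum_mul_sum, Finset.sum_product]

theorem exists_pow_le_of_renewal {ι : Type*} {s : Finset ι} {ℓ : ι → ℕ} {f : ι → ℝ} {g : ℕ → ℝ}
    {ρ : ℝ} {D : ℕ} (hρ : 0 < ρ) (hℓ : ∀ i ∈ s, 0 < ℓ i ∧ ℓ i ≤ D) (hf : ∀ i ∈ s, 0 ≤ f i)
    (hg : ∀ n, 0 < g n) (hrenew : ∀ n, D ≤ n → ∑ i ∈ s, f i * g (n - ℓ i) ≤ g n)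
    (hsum : 1 < ∑ i ∈ s, f i / ρ ^ ℓ i) :
    ∃ c σ : ℝ, 0 < c ∧ ρ < σ ∧ ∀ n, c * σ ^ n ≤ g n := by
  have hcont : ContinuousAt (fun σ : ℝ => ∑ i ∈ s, f i / σ ^ ℓ i) ρ :=
    tendsto_finsetSum s fun i _ =>
      tendsto_const_nhds.div (continuousAt_id.pow (ℓ i)) (pow_ne_zero _ hρ.ne')
  obtain ⟨σ, hσ, hρσ⟩ : ∃ σ, 1 < ∑ i ∈ s, f i / σ ^ ℓ i ∧ ρ < σ :=
    (((hcont.eventually (lt_mem_nhds hsum)).filter_mono nhdsWithin_le_nhds).and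
      (self_mem_nhdsWithin (s := Ioi ρ))).exists
  have hσ0 : 0 < σ := hρ.trans hρσ
  obtain ⟨m, -, hm⟩ := Finset.exists_min_image (Finset.range (D + 1)) (fun n => g n / σ ^ n)
    ⟨0, by simp⟩
  refine ⟨g m / σ ^ m, σ, by have := hg m; positivity, hρσ, fun n => ?_⟩
  have hc : 0 ≤ g m / σ ^ m := by have := hg m; positivity
  induction n using Nat.strong_induction_on with
  | _ n ih =>
    rcases lt_or_ge n D with hn | hn
    · exact (le_div_iff₀ (by positivity)).mp (hm n (Finset.mem_range.mpr (by omega)))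
    · calc g m / σ ^ m * σ ^ n ≤ g m / σ ^ m * σ ^ n * ∑ i ∈ s, f i / σ ^ ℓ i :=
            le_mul_of_one_le_right (by positivity) hσ.le
        _ = ∑ i ∈ s, f i * (g m / σ ^ m * σ ^ (n - ℓ i)) := by
            rw [Finset.mul_sum]
            refine Finset.sum_congr rfl fun i hi => ?_
            rw [pow_sub₀ σ hσ0.ne' ((hℓ i hi).2.trans hn)]
            ring
        _ ≤ ∑ i ∈ s, f i * g (n - ℓ i) := Finset.sum_le_sum fun i hi =>
            mul_le_mul_of_nonneg_left (ih _ (by have := hℓ i hi; omega)) (hf i hi)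
        _ ≤ g n := hrenew n hn

section Visited

variable {G H : Type*}

/-- The points visited by the walk on `G` that starts at `0` and whose increments are the entries of
the word, the latest increment being the head. -/
def visited [AddMonoid G] : List G → Set G
  | [] => {0}
  | d :: w => insert (d + w.sum) (visited w)

theorem sum_mem_visited [AddMonoid G] (w : List G) : w.sum ∈ visited w := by
  cases w <;> simp [visited]

theorem zero_mem_visited [AddMonoid G] (w : List G) : 0 ∈ visited w := by
  induction w with
  | nil => rfl
  | cons d w ih => exact mem_insert_of_mem _ ih

theorem visited_append [AddMonoid G] (w l : List G) :
    visited (w ++ l) = visited l ∪ (· + l.sum) '' visited w := by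
  induction w with
  | nil => simp [visited, sum_mem_visited]
  | cons d w ih =>
    simp only [visited, List.cons_append, List.sum_append, ih, image_insert_eq, add_assoc,
      union_insert]

theorem visited_map [AddMonoid G] [AddMonoid H] (f : G →+ H) (w : List G) :
    visited (w.map f) = f '' visited w := by
  induction w with
  | nil => simp [visited]
  | cons d w ih => simp [visited, ih, image_insert_eq, ← map_list_sum]

theorem visited_reverse [AddCommGroup G] (w : List G) :
    visited w.reverse = (w.sum - ·) '' visited w := by
  induction w with
  | nil => simp [visited]
  | cons d w ih =>
    have hd : d ∈ (fun p => d + w.sum - p) '' visited w := ⟨w.sum, sum_mem_visited w, by simp⟩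
    simp only [List.reverse_cons, visited_append, ih, image_image]
    simp only [visited, image_insert_eq, List.sum_cons, List.sum_nil, add_zero, sub_self,
      sub_add_eq_add_sub, add_comm w.sum d, insert_union, singleton_union]
    rw [insert_eq_of_mem (mem_insert_of_mem _ hd)]

/-- The walk with increments `w` (latest first) ends at the greatest point it visits. On `ℤ` this is
a walk ending at its maximum; on `ℤ × ℤ`, with the product order, it is a walk ending at the
north-east corner of its range. -/
def EndsAtMax [AddMonoid G] [Preorder G] (w : List G) : Prop :=
  ∀ p ∈ visited w, p ≤ w.sum

theorem endsAtMax_reverse_map_neg_iff [AddCommGroup G] [PartialOrder G] [IsOrderedAddMonoid G]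
    {w : List G} : EndsAtMax (w.map Neg.neg).reverse ↔ ∀ p ∈ visited w, p ≤ 0 := by
  have hneg : w.map Neg.neg = w.map (-AddMonoidHom.id G) := rfl
  rw [EndsAtMax, List.sum_reverse, visited_reverse, hneg, visited_map, ← map_list_sum]
  simp

theorem exists_append_endsAtMax [AddCommGroup G] [LinearOrder G] [IsOrderedAddMonoid G]
    (w : List G) :
    ∃ u v, w = u ++ v ∧ EndsAtMax (u.map Neg.neg).reverse ∧ EndsAtMax v := by
  simp only [endsAtMax_reverse_map_neg_iff]
  induction w with
  | nil => exact ⟨[], [], rfl, by simp [visited], by simp [EndsAtMax, visited]⟩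
  | cons a w ih =>
    obtain ⟨u, v, rfl, hu, hv⟩ := ih
    rcases le_or_gt (a + u.sum) 0 with hneg | hpos
    · exact ⟨a :: u, v, rfl, by simpa [visited] using ⟨hneg, hu⟩, hv⟩
    · refine ⟨[], a :: (u ++ v), rfl, by simp [visited], ?_⟩
      have hlt : v.sum < a + (u.sum + v.sum) := by
        rw [← add_assoc]; exact lt_add_of_pos_left _ hpos
      simp only [EndsAtMax, visited, visited_append, List.sum_cons, List.sum_append,
        forall_mem_insert, mem_union, or_imp, forall_and, forall_mem_image]
      exact ⟨le_rfl, fun p hp => (hv p hp).trans hlt.le,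
        fun p hp => (add_le_of_nonpos_left (hu p hp)).trans hlt.le⟩

theorem EndsAtMax.append [AddMonoid G] [Preorder G] [AddLeftMono G] [AddRightMono G]
    {w l : List G} (hw : EndsAtMax w) (hl : EndsAtMax l) : EndsAtMax (w ++ l) := by
  have hnonneg : 0 ≤ w.sum := hw 0 (zero_mem_visited w)
  rw [EndsAtMax, visited_append, List.sum_append]
  rintro _ (hp | ⟨q, hq, rfl⟩)
  · exact (hl _ hp).trans (le_add_of_nonneg_left hnonneg)
  · exact add_le_add_left (hw q hq) l.sum

theorem endsAtMax_map_iff [AddMonoid G] [AddMonoid H] [Preorder H] (f : G →+ H) {w : List G} :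
    EndsAtMax (w.map f) ↔ ∀ p ∈ visited w, f p ≤ f w.sum := by
  rw [EndsAtMax, visited_map, ← map_list_sum, forall_mem_image]

theorem endsAtMax_prod_iff [AddMonoid G] [AddMonoid H] [Preorder G] [Preorder H]
    {w : List (G × H)} : EndsAtMax w ↔ EndsAtMax (w.map Prod.fst) ∧ EndsAtMax (w.map Prod.snd) :=
  (forall₂_and.trans (and_congr (endsAtMax_map_iff (AddMonoidHom.fst G H)).symm
    (endsAtMax_map_iff (AddMonoidHom.snd G H)).symm))

end Visited

section PartiallyDirected

/-- The words of length `n` coding partially directed walks: the letter `0` is a forward step, the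
letters `1` and `-1` are the two sideways steps, and a sideways step is never followed by the
opposite one. -/
def pdWords (n : ℕ) : Finset (List SignType) :=
  chainWords (fun d e => d * e ≠ -1) n 0

theorem mem_pdWords {n : ℕ} {w : List SignType} :
    w ∈ pdWords n ↔ w.length = n ∧ w.IsChain fun d e => d * e ≠ -1 := by
  rw [pdWords, mem_chainWords, List.isChain_cons]
  simp

/-- The exponential growth rate of the number of partially directed walks. -/
noncomputable def pdGrowth : ℝ := 1 + √2

theorem pdGrowth_pos : 0 < pdGrowth := by
  unfold pdGrowth; positivity

/-- The eigenvector, for the eigenvalue `pdGrowth`, of the transfer matrix of partially directed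
walks. -/
noncomputable def pdWeight (e : SignType) : ℝ := if e = 0 then √2 else 1

theorem one_le_pdWeight (e : SignType) : 1 ≤ pdWeight e := by
  unfold pdWeight; split_ifs <;> simp

theorem pdWeight_le (e : SignType) : pdWeight e ≤ √2 := by
  unfold pdWeight; split_ifs <;> simp

theorem sum_pdWeight (d : SignType) :
    ∑ e with d * e ≠ -1, pdWeight e = pdGrowth * pdWeight d := by
  have hsq : √2 * √2 = 2 := Real.mul_self_sqrt zero_le_two
  have huniv : (Finset.univ : Finset SignType) = {0, -1, 1} := rfl
  rw [Finset.sum_filter, huniv]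
  cases d <;> simp [pdWeight, pdGrowth] <;> linarith

theorem card_pdWords_le (n : ℕ) : ((pdWords n).card : ℝ) ≤ √2 * pdGrowth ^ n := by
  simpa [pdWords, pdWeight, mul_comm] using
    card_chainWords_le (fun d e : SignType => d * e ≠ -1) one_le_pdWeight sum_pdWeight n 0

theorem pow_le_card_pdWords (n : ℕ) : pdGrowth ^ n ≤ (pdWords n).card := by
  have h := le_card_chainWords (fun d e : SignType => d * e ≠ -1) pdWeight_le sum_pdWeight n 0
  rw [pdWeight, if_pos rfl, mul_comm] at h
  exact le_of_mul_le_mul_left h (by positivity)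

open Classical in
/-- The partially directed walks of length `n` whose lateral displacement ends at its maximum. -/
noncomputable def recordWords (n : ℕ) : Finset (List SignType) :=
  {w ∈ pdWords n | EndsAtMax (w.map (↑· : SignType → ℤ))}

theorem mem_recordWords {n : ℕ} {w : List SignType} :
    w ∈ recordWords n ↔ w ∈ pdWords n ∧ EndsAtMax (w.map (↑· : SignType → ℤ)) := by
  classical
  simp [recordWords]

theorem reverse_map_neg_mem_pdWords {n : ℕ} {w : List SignType} (hw : w ∈ pdWords n) :
    (w.map Neg.neg).reverse ∈ pdWords n := by
  rw [mem_pdWords] at hw ⊢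
  simp only [List.length_reverse, List.length_map, List.isChain_reverse, List.isChain_map,
    neg_mul_neg]
  exact ⟨hw.1, hw.2.imp fun d e h => by rwa [mul_comm]⟩

/-- Cut a walk at the time of its maximum and reverse the second piece. -/
theorem card_pdWords_le_sum_antidiagonal (n : ℕ) :
    (pdWords n).card ≤
      ∑ p ∈ Finset.HasAntidiagonal.antidiagonal n,
        (recordWords p.1).card * (recordWords p.2).card := by
  classical
  simp only [← Finset.card_product]
  rw [← Finset.card_sigma]
  refine Finset.card_le_card_of_surjOn (fun q => (q.2.1.map Neg.neg).reverse ++ q.2.2) ?_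
  intro w hw
  obtain ⟨hlen, hchain⟩ := mem_pdWords.mp hw
  obtain ⟨u', v', huv, hu', hv'⟩ := exists_append_endsAtMax (w.map (↑· : SignType → ℤ))
  obtain ⟨u, v, rfl, rfl, rfl⟩ := List.map_eq_append_iff.mp huv
  obtain ⟨hu, hv, -⟩ := List.isChain_append.mp hchain
  refine ⟨⟨(u.length, v.length), (u.map Neg.neg).reverse, v⟩, ?_, ?_⟩
  · have hneg : ((u.map Neg.neg).reverse.map (↑· : SignType → ℤ)) =
        ((u.map (↑· : SignType → ℤ)).map Neg.neg).reverse := by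
      simp [List.map_reverse, Function.comp_def]
    simp only [Finset.coe_sigma, Set.mem_sigma_iff, Finset.mem_coe,
      Finset.HasAntidiagonal.mem_antidiagonal, Finset.mem_product, mem_recordWords]
    refine ⟨by simpa using hlen, ⟨reverse_map_neg_mem_pdWords (mem_pdWords.mpr ⟨rfl, hu⟩), ?_⟩,
      mem_pdWords.mpr ⟨rfl, hv⟩, hv'⟩
    rwa [hneg]
  · simp [List.map_reverse]

theorem le_sq_sum_card_recordWords (M : ℕ) :
    (M : ℝ) ≤ (∑ k ∈ Finset.range M, (recordWords k).card / pdGrowth ^ k) ^ 2 := by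
  have hμ := pdGrowth_pos
  refine le_sq_sum_range_of_one_le_sum_antidiagonal (fun k => by positivity) (fun n => ?_) M
  have hsplit : ∑ p ∈ Finset.HasAntidiagonal.antidiagonal n,
      ((recordWords p.1).card / pdGrowth ^ p.1 * ((recordWords p.2).card / pdGrowth ^ p.2) : ℝ) =
      (∑ p ∈ Finset.HasAntidiagonal.antidiagonal n,
        ((recordWords p.1).card * (recordWords p.2).card : ℝ)) / pdGrowth ^ n := by
    rw [Finset.sum_div]
    refine Finset.sum_congr rfl fun p hp => ?_
    rw [div_mul_div_comm, ← pow_add, Finset.HasAntidiagonal.mem_antidiagonal.mp hp]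
  rw [hsplit, one_le_div (pow_pos hμ n)]
  exact (pow_le_card_pdWords n).trans (mod_cast card_pdWords_le_sum_antidiagonal n)

end PartiallyDirected

section Prudent

/-- The words (latest increment first) of the prudent walks on `ℤ²`. -/
def IsPrudent : List (ℤ × ℤ) → Prop
  | [] => True
  | d :: w => IsPrudent w ∧ IsStep d ∧ ∀ k : ℕ, 1 ≤ k → w.sum + (k : ℤ) • d ∉ visited w

theorem IsPrudent.isStep {w : List (ℤ × ℤ)} (h : IsPrudent w) : ∀ d ∈ w, IsStep d := by
  induction w with
  | nil => simp
  | cons d w ih => exact List.forall_mem_cons.mpr ⟨h.2.1, ih h.1⟩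

/-- The step coded by a letter of a partially directed walk whose forward step is `f`; for the
forward step `(1, 0)` the sideways steps are `(0, 1)` and `(0, -1)`. -/
def pdStep (f : ℤ × ℤ) (e : SignType) : ℤ × ℤ := if e = 0 then f else (e : ℤ) • f.swap

theorem snd_pdStep_one_zero (e : SignType) : (pdStep (1, 0) e).2 = e := by
  cases e <;> rfl

theorem pdStep_one_zero_injective : Function.Injective (pdStep (1, 0)) := by
  intro d e h
  cases d <;> cases e <;> simp_all [pdStep]

/-- A prudent walk that ends on the east side of its range and is not blocked there in the vertical
direction `e`; such a walk can be continued by `pdStep (1, 0) e`. -/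
structure IsEastFront (e : SignType) (w : List (ℤ × ℤ)) : Prop where
  isPrudent : IsPrudent w
  fst_le : ∀ p ∈ visited w, p.1 ≤ w.sum.1
  snd_le : ∀ p ∈ visited w, p.1 = w.sum.1 → 0 ≤ (e : ℤ) * (w.sum.2 - p.2)

theorem IsEastFront.cons {e e' : SignType} {w : List (ℤ × ℤ)} (h : IsEastFront e w)
    (he : e * e' ≠ -1) : IsEastFront e' (pdStep (1, 0) e :: w) where
  isPrudent := by
    refine ⟨h.isPrudent, by cases e <;> simp [pdStep, IsStep], fun k hk hmem => ?_⟩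
    have hx := h.fst_le _ hmem
    have hy := h.snd_le _ hmem
    cases e <;> simp [pdStep] at hx hy <;> omega
  fst_le := by
    simp only [visited, forall_mem_insert, List.sum_cons, le_refl, true_and]
    intro p hp
    have hx := h.fst_le p hp
    cases e <;> simp [pdStep] <;> omega
  snd_le := by
    simp only [visited, forall_mem_insert, List.sum_cons, sub_self, mul_zero, le_refl,
      implies_true, true_and]
    intro p hp
    have hx := h.fst_le p hp
    have hy := h.snd_le p hp
    cases e <;> cases e' <;> simp [pdStep] at he hy ⊢ <;> omega

theorem IsEastFront.endsAtMax_fst {e : SignType} {w : List (ℤ × ℤ)} (h : IsEastFront e w) :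
    EndsAtMax (w.map Prod.fst) :=
  (endsAtMax_map_iff (AddMonoidHom.fst ℤ ℤ)).mpr h.fst_le

theorem IsEastFront.append {e : SignType} {ys : List SignType} {l : List (ℤ × ℤ)}
    (h : IsEastFront 0 l) (hys : (e :: ys).IsChain fun d e => d * e ≠ -1) :
    IsEastFront e (ys.map (pdStep (1, 0)) ++ (1, 0) :: l) := by
  induction ys generalizing e with
  | nil => exact h.cons (by simp)
  | cons d ys ih =>
    obtain ⟨hed, hys⟩ := List.isChain_cons_cons.mp hys
    exact (ih hys).cons (by rwa [mul_comm])

/-- The prudent walks that end at the north-east corner of their range. -/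
def IsPrudentNE (w : List (ℤ × ℤ)) : Prop := IsPrudent w ∧ EndsAtMax w

theorem isPrudentNE_nil : IsPrudentNE [] := ⟨trivial, by simp [EndsAtMax, visited]⟩

theorem IsPrudentNE.isEastFront {w : List (ℤ × ℤ)} (h : IsPrudentNE w) : IsEastFront 0 w :=
  ⟨h.1, fun p hp => (h.2 p hp).1, by simp⟩

/-- The words that continue every prudent walk ending at the north-east corner of its range to a
longer walk of the same kind. -/
def IsCornerExtension (w : List (ℤ × ℤ)) : Prop :=
  ∀ l, IsPrudentNE l → IsPrudentNE (w ++ l)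

theorem IsCornerExtension.append {w w' : List (ℤ × ℤ)} (h : IsCornerExtension w)
    (h' : IsCornerExtension w') : IsCornerExtension (w ++ w') := fun l hl => by
  rw [List.append_assoc]; exact h _ (h' l hl)

theorem IsCornerExtension.isPrudent {w : List (ℤ × ℤ)} (h : IsCornerExtension w) : IsPrudent w := by
  simpa using (h [] isPrudentNE_nil).1

theorem isCornerExtension_of_mem_recordWords {n : ℕ} {ys : List SignType}
    (hys : ys ∈ recordWords n) : IsCornerExtension (ys.map (pdStep (1, 0)) ++ [(1, 0)]) := by
  intro l hl
  obtain ⟨hpd, hmax⟩ := mem_recordWords.mp hys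
  have hfront : IsEastFront 0 (ys.map (pdStep (1, 0)) ++ (1, 0) :: l) :=
    hl.isEastFront.append ((mem_chainWords _).mp hpd).2
  have hsnd : EndsAtMax ((ys.map (pdStep (1, 0)) ++ (1, 0) :: l).map Prod.snd) := by
    have hone : EndsAtMax [(0 : ℤ)] := by simp [EndsAtMax, visited]
    simpa [Function.comp_def, snd_pdStep_one_zero] using
      hmax.append (hone.append (endsAtMax_prod_iff.mp hl.2).2)
  rw [List.append_assoc, List.singleton_append]
  exact ⟨hfront.isPrudent, endsAtMax_prod_iff.mpr ⟨hfront.endsAtMax_fst, hsnd⟩⟩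

theorem isCornerExtension_replicate (n : ℕ) : IsCornerExtension (List.replicate n (1, 0)) := by
  induction n with
  | zero => exact fun l hl => hl
  | succ n ih =>
    have hone : IsCornerExtension [(1, 0)] :=
      isCornerExtension_of_mem_recordWords (n := 0) (ys := []) <| by
        simp [mem_recordWords, mem_pdWords, EndsAtMax, visited]
    exact hone.append ih

/-- The word of the detour N, W, N, E: a corner extension with a step to the west, which marks where
the partially directed walk next to it ends. -/
def hook : List (ℤ × ℤ) := [(1, 0), (0, 1), (-1, 0), (0, 1)]

theorem isCornerExtension_hook : IsCornerExtension hook := by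
  rintro l ⟨hl, hmax⟩
  have hfresh : ∀ p : ℤ × ℤ, l.sum.1 < p.1 ∨ l.sum.2 < p.2 → p ∉ visited l := fun p hp hmem => by
    have hle := hmax p hmem
    rw [Prod.le_def] at hle
    omega
  have hhook : EndsAtMax hook := by
    simp [EndsAtMax, hook, visited, Prod.le_def]
  have hstep : ∀ d ∈ hook, IsStep d := by simp [hook, IsStep]
  refine ⟨⟨⟨⟨⟨hl, hstep _ (by simp [hook]), fun k hk => ?_⟩, hstep _ (by simp [hook]),
    fun k hk => ?_⟩, hstep _ (by simp [hook]), fun k hk => ?_⟩, hstep _ (by simp [hook]),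
    fun k hk => ?_⟩, hhook.append hmax⟩
  · exact hfresh _ (by simp; omega)
  all_goals simp only [List.append_eq, List.cons_append, List.nil_append, visited,
    mem_insert_iff, not_or, Prod.ext_iff, List.sum_cons]
  · exact ⟨by simp; omega, hfresh _ (by simp)⟩
  · exact ⟨by simp; omega, by simp, hfresh _ (by simp; omega)⟩
  · exact ⟨by simp; omega, by simp, by simp, hfresh _ (by simp; omega)⟩

end Prudent

section Counting

theorem append_cons_inj_of_notMem_of_notMem {α : Type*} {a : α} {x₁ x₂ z₁ z₂ : List α}
    (h₁ : a ∉ x₁) (h₂ : a ∉ x₂) (h : x₁ ++ a :: z₁ = x₂ ++ a :: z₂) : x₁ = x₂ ∧ z₁ = z₂ := by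
  classical
  have hlen : ∀ {x z : List α}, a ∉ x → (x ++ a :: z).idxOf a = x.length := fun hx => by
    rw [List.idxOf_append_of_notMem hx, List.idxOf_cons_self, add_zero]
  obtain ⟨hx, hz⟩ := List.append_inj h (by rw [← hlen h₁, h, hlen h₂])
  exact ⟨hx, (List.cons.inj hz).2⟩

theorem finite_setOf_isStep : {d : ℤ × ℤ | IsStep d}.Finite :=
  (Set.toFinite {(1, 0), (-1, 0), (0, 1), (0, -1)}).subset fun _ hd => hd

theorem finite_setOf_forall_isStep (n : ℕ) :
    {w : List (ℤ × ℤ) | w.length = n ∧ ∀ d ∈ w, IsStep d}.Finite := by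
  have := finite_setOf_isStep.to_subtype
  refine ((List.finite_length_eq {d : ℤ × ℤ | IsStep d} n).image (List.map Subtype.val)).subset ?_
  rintro w ⟨hlen, hw⟩
  obtain ⟨v, rfl⟩ := (Set.range_list_map_coe {d : ℤ × ℤ | IsStep d}).ge hw
  exact ⟨v, (List.length_map _).symm.trans hlen, rfl⟩

open Classical in
/-- The nearest-neighbour walks of length `n` on `ℤ²`, as words, that have the property `P`. -/
noncomputable def stepWords (P : List (ℤ × ℤ) → Prop) (n : ℕ) : Finset (List (ℤ × ℤ)) :=
  {w ∈ (finite_setOf_forall_isStep n).toFinset | P w}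

theorem mem_stepWords {P : List (ℤ × ℤ) → Prop} {n : ℕ} {w : List (ℤ × ℤ)} :
    w ∈ stepWords P n ↔ w.length = n ∧ (∀ d ∈ w, IsStep d) ∧ P w := by
  simp [stepWords, and_assoc]

theorem sum_card_recordWords_mul_card_stepWords_le {M n : ℕ} (hn : M + 5 ≤ n) :
    ∑ m ∈ Finset.range M, (recordWords m).card * (stepWords IsCornerExtension (n - (m + 5))).card ≤
      (stepWords IsCornerExtension n).card := by
  classical
  simp only [← Finset.card_product]
  rw [← Finset.card_sigma]
  refine Finset.card_le_card_of_injOn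
    (fun q => q.2.1.map (pdStep (1, 0)) ++ [(1, 0)] ++ hook ++ q.2.2) ?_ ?_
  · rintro ⟨m, ys, w⟩ hq
    simp only [Finset.coe_sigma, Set.mem_sigma_iff, Finset.mem_coe, Finset.mem_product,
      Finset.mem_range] at hq
    obtain ⟨hm, hys, hw⟩ := hq
    obtain ⟨hlen, -, hw⟩ := mem_stepWords.mp hw
    have hext : IsCornerExtension (ys.map (pdStep (1, 0)) ++ [(1, 0)] ++ hook ++ w) :=
      ((isCornerExtension_of_mem_recordWords hys).append isCornerExtension_hook).append hw
    have hys_len : ys.length = m := (mem_pdWords.mp (mem_recordWords.mp hys).1).1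
    refine Finset.mem_coe.mpr (mem_stepWords.mpr ⟨?_, hext.isPrudent.isStep, hext⟩)
    simp [hook]
    omega
  · rintro ⟨m, ys, w⟩ hq ⟨m', ys', w'⟩ hq' heq
    simp only [Finset.coe_sigma, Set.mem_sigma_iff, Finset.mem_coe, Finset.mem_product,
      mem_recordWords, mem_pdWords] at hq hq'
    have hwest : ∀ zs : List SignType,
        (-1, 0) ∉ zs.map (pdStep (1, 0)) ++ [(1, 0), (1, 0), (0, 1)] := fun zs => by
      simp only [List.mem_append, List.mem_map, not_or, not_exists, not_and]
      exact ⟨fun e _ => by cases e <;> simp [pdStep], by simp⟩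
    obtain ⟨hys, hw⟩ := append_cons_inj_of_notMem_of_notMem (hwest ys) (hwest ys')
      (by simpa [hook] using heq)
    obtain rfl :=
      List.map_injective_iff.mpr pdStep_one_zero_injective (List.append_cancel_right hys)
    obtain rfl := (List.cons.inj hw).2
    obtain rfl := hq.2.1.1.1.symm.trans hq'.2.1.1.1
    rfl

theorem card_stepWords_isCornerExtension_pos (n : ℕ) :
    0 < (stepWords IsCornerExtension n).card :=
  have hext := isCornerExtension_replicate n
  Finset.card_pos.mpr ⟨_, mem_stepWords.mpr ⟨List.length_replicate, hext.isPrudent.isStep, hext⟩⟩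

theorem exists_pow_le_card_stepWords_isCornerExtension :
    ∃ c σ : ℝ, 0 < c ∧ pdGrowth < σ ∧ ∀ n, c * σ ^ n ≤ (stepWords IsCornerExtension n).card := by
  have hμ := pdGrowth_pos
  obtain ⟨M, hM⟩ := exists_nat_gt ((pdGrowth ^ 5) ^ 2)
  refine exists_pow_le_of_renewal (s := Finset.range M) (ℓ := (· + 5)) (D := M + 5)
    (f := fun m => (recordWords m).card) hμ ?_ (fun m _ => by positivity)
    (fun n => mod_cast card_stepWords_isCornerExtension_pos n)
    (fun n hn => mod_cast sum_card_recordWords_mul_card_stepWords_le hn) ?_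
  · intro m hm
    have := Finset.mem_range.mp hm
    omega
  · have hlt := lt_of_pow_lt_pow_left₀ 2 (Finset.sum_nonneg fun k _ => by positivity)
      (hM.trans_le (le_sq_sum_card_recordWords M))
    simpa only [pow_add, ← div_div, ← Finset.sum_div, one_lt_div (pow_pos hμ 5)] using hlt

end Counting

section Splitting

theorem IsPrudent.map {f : ℤ × ℤ →+ ℤ × ℤ} (hf : Function.Injective f)
    (hstep : ∀ d, IsStep d → IsStep (f d)) {w : List (ℤ × ℤ)} (h : IsPrudent w) :
    IsPrudent (w.map f) := by
  induction w with
  | nil => trivial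
  | cons d w ih =>
    refine ⟨ih h.1, hstep d h.2.1, fun k hk => ?_⟩
    rw [visited_map, ← map_list_sum, ← map_zsmul, ← map_add, hf.mem_set_image]
    exact h.2.2 k hk

theorem IsStep.units_smul {d : ℤ × ℤ} (h : IsStep d) (u : (ℤ × ℤ)ˣ) : IsStep (u • d) := by
  have hu := Prod.isUnit_iff.mp u.isUnit
  simp only [Int.isUnit_iff] at hu
  rw [Units.smul_def]
  generalize (u : ℤ × ℤ) = v at hu
  obtain ⟨a, b⟩ := v
  obtain ⟨rfl | rfl, rfl | rfl⟩ := hu <;> rcases h with rfl | rfl | rfl | rfl <;> simp [IsStep]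

theorem IsPrudent.map_units_smul {w : List (ℤ × ℤ)} (h : IsPrudent w) (u : (ℤ × ℤ)ˣ) :
    IsPrudent (w.map (u • ·)) :=
  h.map (f := DistribSMul.toAddMonoidHom (ℤ × ℤ) u) (MulAction.injective u)
    fun _ hd => hd.units_smul u

/-- The prudent walks that end at one of the four corners of their range. The reflections that move
this corner to the north-east are the multiplications by the units `(±1, ±1)` of `ℤ × ℤ`. -/
def IsPrudentCorner (w : List (ℤ × ℤ)) : Prop :=
  IsPrudent w ∧ ∃ u : (ℤ × ℤ)ˣ, EndsAtMax (w.map (u • ·))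

theorem card_isPrudentCorner_mul_card_isCornerExtension_le (s n : ℕ) :
    (stepWords IsPrudentCorner s).card * (stepWords IsCornerExtension n).card ≤
      (stepWords IsPrudent (s + n)).card := by
  have hcorner : ∀ b : List (ℤ × ℤ), ∃ u : (ℤ × ℤ)ˣ, b ∈ stepWords IsPrudentCorner s →
      EndsAtMax (b.map (u • ·)) := fun b => by
    by_cases hb : b ∈ stepWords IsPrudentCorner s
    · exact (mem_stepWords.mp hb).2.2.2.imp fun u hu _ => hu
    · exact ⟨1, fun h => absurd h hb⟩
  choose u hu using hcorner
  rw [← Finset.card_product]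
  refine Finset.card_le_card_of_injOn (fun q => q.2.map ((u q.1)⁻¹ • ·) ++ q.1) ?_ ?_
  · rintro ⟨b, w⟩ hq
    obtain ⟨hb, hw⟩ := Finset.mem_product.mp hq
    have hmax := hu b hb
    obtain ⟨hblen, -, hbp, -⟩ := mem_stepWords.mp hb
    obtain ⟨hwlen, -, hw⟩ := mem_stepWords.mp hw
    have hp : IsPrudent (w.map ((u b)⁻¹ • ·) ++ b) := by
      simpa [Function.comp_def] using
        (hw _ ⟨hbp.map_units_smul (u b), hmax⟩).1.map_units_smul (u b)⁻¹
    refine Finset.mem_coe.mpr (mem_stepWords.mpr ⟨?_, hp.isStep, hp⟩)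
    simp [hblen, hwlen, add_comm]
  · rintro ⟨b, w⟩ hq ⟨b', w'⟩ hq' heq
    simp only [Finset.coe_product, Set.mem_prod, Finset.mem_coe, mem_stepWords] at hq hq'
    obtain ⟨hw, rfl⟩ := List.append_inj' heq (hq.1.1.trans hq'.1.1.symm)
    exact congrArg (b, ·) (List.map_injective_iff.mpr (MulAction.injective (u b)⁻¹) hw)

/-- The walks without immediate reversals that never use one of the four steps, i.e. the partially
directed walks. -/
def IsPartiallyDirected (w : List (ℤ × ℤ)) : Prop :=
  (w.IsChain fun d e => d + e ≠ 0) ∧ ∃ f, IsStep f ∧ f ∉ w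

theorem IsPrudent.isChain {w : List (ℤ × ℤ)} (h : IsPrudent w) :
    w.IsChain fun d e => d + e ≠ 0 := by
  induction w with
  | nil => exact .nil
  | cons d w ih =>
    refine List.isChain_cons.mpr ⟨fun e he hde => ?_, ih h.1⟩
    obtain ⟨l, rfl⟩ := List.head?_eq_some_iff.mp he
    have hsum : (e :: l).sum + ((1 : ℕ) : ℤ) • d = l.sum := by
      rw [List.sum_cons, Nat.cast_one, one_smul, add_right_comm, add_comm e, hde, zero_add]
    exact h.2.2 1 le_rfl (hsum ▸ mem_insert_of_mem _ (sum_mem_visited l))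

theorem mem_range_pdStep_of_ne_neg {f d : ℤ × ℤ} (hf : IsStep f) (hd : IsStep d) (hdf : d ≠ -f) :
    d ∈ range (pdStep f) := by
  rw [Set.mem_range]
  revert hdf
  rcases hf with rfl | rfl | rfl | rfl <;> rcases hd with rfl | rfl | rfl | rfl <;> decide

theorem pdStep_add_pdStep_ne_zero_iff {f : ℤ × ℤ} (hf : IsStep f) {d e : SignType} :
    pdStep f d + pdStep f e ≠ 0 ↔ d * e ≠ -1 := by
  rcases hf with rfl | rfl | rfl | rfl <;> cases d <;> cases e <;> simp [pdStep]

theorem card_isPartiallyDirected_le (n : ℕ) :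
    (stepWords IsPartiallyDirected n).card ≤ 4 * (pdWords n).card := by
  classical
  have hsub : stepWords IsPartiallyDirected n ⊆
      ({(1, 0), (-1, 0), (0, 1), (0, -1)} : Finset (ℤ × ℤ)).biUnion fun f =>
        (pdWords n).image (List.map (pdStep f)) := by
    intro w hw
    obtain ⟨hlen, hstep, hchain, f, hf, hfw⟩ := mem_stepWords.mp hw
    have hf' : IsStep (-f) := by simpa using hf.units_smul (-1)
    have hrange : ∀ d ∈ w, d ∈ range (pdStep (-f)) := fun d hd =>
      mem_range_pdStep_of_ne_neg hf' (hstep d hd) (by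
        rintro rfl
        exact hfw (by simpa using hd))
    obtain ⟨v, rfl⟩ := (Set.range_list_map (pdStep (-f))).ge hrange
    refine Finset.mem_biUnion.mpr ⟨-f, by simpa [IsStep] using hf', Finset.mem_image_of_mem _ ?_⟩
    simp only [List.isChain_map, pdStep_add_pdStep_ne_zero_iff hf', List.length_map] at hlen hchain
    exact mem_pdWords.mpr ⟨hlen, hchain⟩
  exact (Finset.card_le_card hsub).trans
    (Finset.card_biUnion_le_card_mul _ _ _ fun f _ => Finset.card_image_le)

end Splitting

section Paths

/-- The word of the first `n` increments of the path `p`, the latest one being the head. -/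
def stepWord {G : Type*} [AddGroup G] (p : ℕ → G) : ℕ → List G
  | 0 => []
  | n + 1 => (p (n + 1) - p n) :: stepWord p n

section StepWord

variable {G : Type*} [AddGroup G] (p : ℕ → G)

theorem length_stepWord (n : ℕ) : (stepWord p n).length = n := by
  induction n with
  | zero => rfl
  | succ n ih => rw [stepWord, List.length_cons, ih]

theorem sum_stepWord (n : ℕ) : (stepWord p n).sum = p n - p 0 := by
  induction n with
  | zero => simp [stepWord]
  | succ n ih => rw [stepWord, List.sum_cons, ih, sub_add_sub_cancel]

theorem mem_stepWord {n : ℕ} {d : G} : d ∈ stepWord p n ↔ ∃ t < n, p (t + 1) - p t = d := by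
  induction n with
  | zero => simp [stepWord]
  | succ n ih => rw [stepWord, List.mem_cons, ih, Nat.exists_lt_succ_right, or_comm, eq_comm]

theorem visited_stepWord (n : ℕ) : visited (stepWord p n) = (fun j => p j - p 0) '' Iic n := by
  induction n with
  | zero =>
    have hIic : Iic 0 = {0} := by ext j; simp
    simp [stepWord, visited, hIic]
  | succ n ih =>
    have hIic : Iic (n + 1) = insert (n + 1) (Iic n) := by
      ext j; simp only [mem_insert_iff, mem_Iic]; omega
    rw [stepWord, visited, ih, sum_stepWord, sub_add_sub_cancel, hIic, image_insert_eq]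

theorem stepWord_add (a n : ℕ) :
    stepWord p (a + n) = stepWord (fun t => p (a + t)) n ++ stepWord p a := by
  induction n with
  | zero => rfl
  | succ n ih => rw [← add_assoc, stepWord, ih]; rfl

theorem stepWord_congr {p p' : ℕ → G} {n : ℕ} (h : ∀ t ≤ n, p t = p' t) :
    stepWord p n = stepWord p' n := by
  induction n with
  | zero => rfl
  | succ n ih =>
    rw [stepWord, stepWord, h _ le_rfl, h n n.le_succ, ih fun t ht => h t (ht.trans n.le_succ)]

theorem sum_drop_stepWord {n L : ℕ} (hn : n ≤ L) :
    ((stepWord p L).drop (L - n)).sum = p n - p 0 := by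
  obtain ⟨m, rfl⟩ := Nat.exists_eq_add_of_le hn
  rw [stepWord_add, Nat.add_sub_cancel_left, List.drop_left' (length_stepWord _ m), sum_stepWord]

theorem stepWord_sum_drop (w : List G) :
    stepWord (fun n => (w.drop (w.length - n)).sum) w.length = w := by
  induction w with
  | nil => rfl
  | cons d w ih =>
    rw [List.length_cons, stepWord]
    congr 1
    · simp
    · refine (stepWord_congr fun t ht => ?_).trans ih
      rw [Nat.succ_sub ht, List.drop_succ_cons]

end StepWord

/-- The first `L` steps of the infinite path `p` are those of a prudent walk. -/
def IsPrudentPath (p : ℕ → ℤ × ℤ) (L : ℕ) : Prop :=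
  ∀ i < L, IsStep (p (i + 1) - p i) ∧
    ∀ k : ℕ, 1 ≤ k → ∀ j ≤ i, p i + (k : ℤ) • (p (i + 1) - p i) ≠ p j

theorem isPrudent_stepWord_iff {p : ℕ → ℤ × ℤ} {n : ℕ} :
    IsPrudent (stepWord p n) ↔ IsPrudentPath p n := by
  induction n with
  | zero => simp [stepWord, IsPrudent, IsPrudentPath]
  | succ n ih =>
    have hshift : ∀ d q : ℤ × ℤ, p n - p 0 + d = q - p 0 ↔ p n + d = q := fun d q => by
      rw [sub_add_eq_add_sub, sub_left_inj]
    rw [stepWord, IsPrudent, ih, IsPrudentPath, IsPrudentPath, Nat.forall_lt_succ_right,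
      visited_stepWord, sum_stepWord]
    simp only [mem_image, mem_Iic, not_exists, not_and, eq_comm (b := p n - p 0 + _), hshift, ne_eq]

/-- The site of the path `π` at time `t`, the time being clamped to `L`. -/
def pathAt {L : ℕ} (π : Fin (L + 1) → ℤ × ℤ) (t : ℕ) : ℤ × ℤ :=
  π ⟨min t L, by omega⟩

theorem pathAt_val {L : ℕ} (π : Fin (L + 1) → ℤ × ℤ) (i : Fin (L + 1)) : pathAt π i = π i :=
  congrArg π (Fin.ext (min_eq_left i.is_le))

theorem mem_prudentSet_iff {L : ℕ} {π : Fin (L + 1) → ℤ × ℤ} :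
    π ∈ prudentSet L ↔ pathAt π 0 = 0 ∧ IsPrudentPath (pathAt π) L := by
  have hcast : ∀ i : Fin L, π i.castSucc = pathAt π i := fun i => (pathAt_val π i.castSucc).symm
  have hsucc : ∀ i : Fin L, π i.succ = pathAt π (i + 1) := fun i => by
    rw [← Fin.val_succ, pathAt_val]
  refine and_congr (by rw [← pathAt_val π 0]; rfl) (Fin.forall_iff.trans ?_)
  simp only [hcast, hsucc]
  refine forall₂_congr fun i hi => and_congr_right fun _ => forall₂_congr fun k _ => ?_
  exact ⟨fun h j hj => pathAt_val π ⟨j, by omega⟩ ▸ h ⟨j, by omega⟩ hj,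
    fun h j hj => pathAt_val π j ▸ h j hj⟩

theorem bijOn_stepWord (L : ℕ) :
    BijOn (fun π : Fin (L + 1) → ℤ × ℤ => stepWord (pathAt π) L) (prudentSet L)
      (stepWords IsPrudent L) := by
  refine ⟨fun π hπ => ?_, fun π hπ π' hπ' h => ?_, fun w hw => ?_⟩
  · have hw := isPrudent_stepWord_iff.mpr (mem_prudentSet_iff.mp hπ).2
    exact mem_stepWords.mpr ⟨length_stepWord _ L, hw.isStep, hw⟩
  · funext i
    have hi := sum_drop_stepWord (pathAt π) i.is_le
    have hi' := sum_drop_stepWord (pathAt π') i.is_le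
    rw [(mem_prudentSet_iff.mp hπ).1, sub_zero, pathAt_val] at hi
    rw [(mem_prudentSet_iff.mp hπ').1, sub_zero, pathAt_val] at hi'
    rw [← hi, ← hi']
    exact congrArg (fun w => (w.drop (L - i)).sum) h
  · obtain ⟨rfl, -, hw⟩ := mem_stepWords.mp hw
    set π : Fin (w.length + 1) → ℤ × ℤ := fun i => (w.drop (w.length - i)).sum with hπ
    have hword : stepWord (pathAt π) w.length = w :=
      (stepWord_congr fun t ht => by simp only [pathAt, hπ, min_eq_left ht]).trans
        (stepWord_sum_drop w)
    refine ⟨π, mem_prudentSet_iff.mpr ⟨by simp [pathAt, hπ], ?_⟩, hword⟩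
    rwa [← isPrudent_stepWord_iff, hword]

theorem ncard_prudentSet (L : ℕ) : (prudentSet L).ncard = (stepWords IsPrudent L).card := by
  rw [(bijOn_stepWord L).ncard_eq, ncard_coe_finset]

end Paths

section Excursions

/-- The sequence `x` takes at time `t + 1` a value that it has not taken before. -/
def IsNewValue (x : ℕ → ℤ) (t : ℕ) : Prop := ∀ i ≤ t, x i ≠ x (t + 1)

/-- The value of `x` at time `a` is the largest or the smallest one up to that time. -/
def IsExtremal (x : ℕ → ℤ) (a : ℕ) : Prop := ∃ s : ℤˣ, ∀ i ≤ a, s * x i ≤ s * x a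

theorem isExtremal_zero (x : ℕ → ℤ) : IsExtremal x 0 :=
  ⟨1, fun i hi => by rw [Nat.le_zero.mp hi]⟩

theorem IsNewValue.exists_lt {x : ℕ → ℤ} {t : ℕ} (h : IsNewValue x t)
    (hstep : ∀ i ≤ t, |x (i + 1) - x i| ≤ 1) :
    ∃ s : ℤˣ, ∀ i ≤ t, s * x i < s * x (t + 1) := by
  have main : ∀ s : ℤˣ, s * x t < s * x (t + 1) → ∀ i ≤ t, s * x i < s * x (t + 1) := by
    intro s ht i hi
    induction hi using Nat.decreasingInduction with
    | self => exact ht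
    | of_succ i hi ih =>
      have hnew := h i hi.le
      have hle := abs_le.mp (hstep i hi.le)
      rcases Int.units_eq_one_or s with rfl | rfl <;> simp at ih ⊢ <;> omega
  rcases (h t le_rfl).lt_or_gt with hlt | hlt
  · exact ⟨1, main 1 (by simpa using hlt)⟩
  · exact ⟨-1, main (-1) (by simpa using hlt)⟩

theorem IsNewValue.isExtremal {x : ℕ → ℤ} {t : ℕ} (h : IsNewValue x t)
    (hstep : ∀ i ≤ t, |x (i + 1) - x i| ≤ 1) : IsExtremal x t := by
  obtain ⟨s, hs⟩ := h.exists_lt hstep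
  refine ⟨s, fun i hi => ?_⟩
  have hi := hs i hi
  have ht := abs_le.mp (hstep t le_rfl)
  rcases Int.units_eq_one_or s with rfl | rfl <;> simp at hi ⊢ <;> omega

theorem exists_eq_of_forall_not_isNewValue {y : ℕ → ℤ} {a n : ℕ}
    (h : ∀ t, a ≤ t → t < n → ¬ IsNewValue y t) : ∀ t ≤ n, ∃ i ≤ a, y i = y t := by
  intro t
  induction t using Nat.strong_induction_on with
  | _ t ih =>
    intro htn
    rcases le_or_gt t a with hta | hat
    · exact ⟨t, hta, rfl⟩
    · obtain ⟨t, rfl⟩ := Nat.exists_eq_succ_of_ne_zero (Nat.ne_zero_of_lt hat)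
      obtain ⟨j, hjt, hj⟩ : ∃ j ≤ t, y j = y (t + 1) := by
        simpa [IsNewValue] using h t (Nat.lt_succ_iff.mp hat) htn
      obtain ⟨i, hia, hi⟩ := ih j (Nat.lt_succ_iff.mpr hjt) (by omega)
      exact ⟨i, hia, hi.trans hj⟩

namespace IsPrudentPath

variable {p : ℕ → ℤ × ℤ} {L : ℕ}

theorem swap (h : IsPrudentPath p L) : IsPrudentPath (fun t => (p t).swap) L := by
  refine fun i hi => ⟨?_, fun k hk j hj heq => (h i hi).2 k hk j hj ?_⟩
  · have hstep := (h i hi).1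
    simp only [IsStep, Prod.ext_iff, Prod.fst_sub, Prod.snd_sub, Prod.fst_swap,
      Prod.snd_swap] at hstep ⊢
    tauto
  · exact Prod.ext (congrArg Prod.snd heq) (congrArg Prod.fst heq)

theorem abs_snd_sub_le (h : IsPrudentPath p L) {t : ℕ} (ht : t < L) :
    |(p (t + 1)).2 - (p t).2| ≤ 1 := by
  rw [← Prod.snd_sub]
  rcases (h t ht).1 with hd | hd | hd | hd <;> simp [hd]

theorem abs_fst_sub_le (h : IsPrudentPath p L) {t : ℕ} (ht : t < L) :
    |(p (t + 1)).1 - (p t).1| ≤ 1 :=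
  h.swap.abs_snd_sub_le ht

theorem fst_eq_iff_snd_ne (h : IsPrudentPath p L) {t : ℕ} (ht : t < L) :
    (p t).1 = (p (t + 1)).1 ↔ (p t).2 ≠ (p (t + 1)).2 := by
  have hstep := (h t ht).1
  simp only [IsStep, Prod.ext_iff, Prod.fst_sub, Prod.snd_sub] at hstep
  omega

theorem sub_ne_of_snd_eq (h : IsPrudentPath p L) {s : ℤˣ} {i t : ℕ} (hit : i ≤ t) (ht : t < L)
    (hsnd : (p i).2 = (p t).2) (hfst : s * (p i).1 < s * (p t).1) :
    p (t + 1) - p t ≠ (-(s : ℤ), 0) := by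
  intro hd
  obtain ⟨k, hk⟩ := Int.eq_ofNat_of_zero_le (sub_nonneg.mpr hfst.le)
  refine (h t ht).2 k (by omega) i hit ?_
  rw [hd, ← hk]
  rcases Int.units_eq_one_or s with rfl | rfl <;> simp [Prod.ext_iff, hsnd]

theorem le_fst_of_sub_ne (h : IsPrudentPath p L) {s : ℤˣ} {t : ℕ} (ht : t < L)
    (hne : p (t + 1) - p t ≠ (-(s : ℤ), 0)) : s * (p t).1 ≤ s * (p (t + 1)).1 := by
  have hstep := (h t ht).1
  simp only [IsStep, ne_eq, Prod.ext_iff, Prod.fst_sub, Prod.snd_sub] at hstep hne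
  rcases Int.units_eq_one_or s with rfl | rfl <;> simp at hne ⊢ <;> omega

/-- Each row met from time `a` on was already visited by time `a`, strictly on the side of direction
`-s`, so that a step in this direction is never prudent. -/
theorem exists_forall_lt_and_sub_ne (h : IsPrudentPath p L) {a n : ℕ} (hnL : n ≤ L) (haL : a < L)
    (hfst : IsNewValue (fun t => (p t).1) a)
    (hsnd : ∀ t, a ≤ t → t < n → ¬ IsNewValue (fun t => (p t).2) t) :
    ∃ s : ℤˣ, ∀ t, a ≤ t → t < n →
      (∀ i ≤ a, s * (p i).1 < s * (p (t + 1)).1) ∧ p (t + 1) - p t ≠ (-(s : ℤ), 0) := by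
  obtain ⟨s, hs⟩ := hfst.exists_lt fun i hi => h.abs_fst_sub_le (hi.trans_lt haL)
  refine ⟨s, fun t hat => ?_⟩
  induction t, hat using Nat.le_induction with
  | base =>
    refine fun _ => ⟨hs, fun hd => ?_⟩
    have hlt := hs a le_rfl
    rw [eq_add_of_sub_eq' hd] at hlt
    rcases Int.units_eq_one_or s with rfl | rfl <;> simp at hlt
  | succ t hat ih =>
    intro htn
    have hlt := (ih (t.lt_succ_self.trans htn)).1
    obtain ⟨i, hia, hi⟩ := exists_eq_of_forall_not_isNewValue hsnd (t + 1) htn.le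
    have hne := h.sub_ne_of_snd_eq (hia.trans (hat.trans t.le_succ)) (htn.trans_le hnL) hi
      (hlt i hia)
    exact ⟨fun i hi => (hlt i hi).trans_le (h.le_fst_of_sub_ne (htn.trans_le hnL) hne), hne⟩

theorem isExtremal_fst (h : IsPrudentPath p L) {a n : ℕ} (han : a < n) (hnL : n ≤ L)
    (hfst : IsNewValue (fun t => (p t).1) a)
    (hsnd : ∀ t, a ≤ t → t < n → ¬ IsNewValue (fun t => (p t).2) t) :
    IsExtremal (fun t => (p t).1) n := by
  obtain ⟨s, hs⟩ := h.exists_forall_lt_and_sub_ne hnL (han.trans_le hnL) hfst hsnd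
  refine ⟨s, fun i hi => ?_⟩
  induction hi using Nat.decreasingInduction with
  | self => rfl
  | of_succ i hi ih =>
    rcases le_total a i with hai | hia
    · exact (h.le_fst_of_sub_ne (hi.trans_le hnL) (hs i hai hi).2).trans ih
    · obtain ⟨m, rfl⟩ := Nat.exists_eq_succ_of_ne_zero (Nat.ne_zero_of_lt han)
      exact ((hs m (Nat.lt_succ_iff.mp han) m.lt_succ_self).1 i hia).le

end IsPrudentPath

/-- What is used about the endpoint `a` of the `i`-th excursion of the walk `q`, the axes being
exchanged if necessary so that the next excursion ends when `q` reaches a new row: the walk is then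
at a corner of its range and, except at the start of the path, it is about to reach a new column. -/
structure IsTurn (q : ℕ → ℤ × ℤ) (L i a : ℕ) : Prop where
  le : a ≤ L
  index_le : i ≤ a + 1
  isExtremal_fst : IsExtremal (fun t => (q t).1) a
  isExtremal_snd : IsExtremal (fun t => (q t).2) a
  start_or_isNewValue : (i = 0 ∧ a = 0) ∨ (a < L ∧ IsNewValue (fun t => (q t).1) a)

namespace IsTurn

variable {q : ℕ → ℤ × ℤ} {L i a n : ℕ}

theorem isNewValue_fst (h : IsTurn q L i a) (hq : IsPrudentPath q L) (haL : a < L)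
    (hsnd : ¬ IsNewValue (fun t => (q t).2) a) : IsNewValue (fun t => (q t).1) a := by
  rcases h.start_or_isNewValue with ⟨-, rfl⟩ | ⟨-, hfst⟩
  · simp only [IsNewValue, Nat.le_zero, forall_eq, not_not] at hsnd ⊢
    exact fun heq => (hq.fst_eq_iff_snd_ne haL).mp heq hsnd
  · exact hfst

theorem next (h : IsTurn q L i a) (hq : IsPrudentPath q L) (han : a ≤ n) (hnL : n < L)
    (hnew : IsNewValue (fun t => (q t).2) n)
    (hold : ∀ t, a ≤ t → t < n → ¬ IsNewValue (fun t => (q t).2) t) :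
    IsTurn (fun t => (q t).swap) L (i + 1) n where
  le := hnL.le
  index_le := by
    rcases han.eq_or_lt with rfl | han
    · rcases h.start_or_isNewValue with ⟨rfl, -⟩ | ⟨-, hfst⟩
      · omega
      · exact absurd (by_contra fun hne => hfst a le_rfl ((hq.fst_eq_iff_snd_ne hnL).mpr hne))
          (hnew a le_rfl)
    · have := h.index_le
      omega
  isExtremal_fst := hnew.isExtremal fun i hi => hq.abs_snd_sub_le (hi.trans_lt hnL)
  isExtremal_snd := by
    rcases han.eq_or_lt with rfl | han
    · exact h.isExtremal_fst
    · exact hq.isExtremal_fst han hnL.le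
        (h.isNewValue_fst hq (han.trans hnL) (hold a le_rfl han)) hold
  start_or_isNewValue := .inr ⟨hnL, hnew⟩

end IsTurn

/-- The path `p` seen from the `i`-th excursion endpoint on: the axes are exchanged for odd `i`. -/
def turned (p : ℕ → ℤ × ℤ) (i t : ℕ) : ℤ × ℤ := if Even i then p t else (p t).swap

theorem turned_succ (p : ℕ → ℤ × ℤ) (i : ℕ) :
    turned p (i + 1) = fun t => (turned p i t).swap := by
  funext t
  by_cases hi : Even i <;> simp [turned, hi, Nat.even_add_one]

theorem IsPrudentPath.turned {p : ℕ → ℤ × ℤ} {L : ℕ} (h : IsPrudentPath p L) (i : ℕ) :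
    IsPrudentPath (turned p i) L := by
  by_cases hi : Even i
  · simpa only [IsPrudentPath, _root_.turned, hi, if_true] using h
  · simpa only [IsPrudentPath, _root_.turned, hi, if_false] using h.swap

theorem IsTurn.isPrudentCorner_stepWord {p : ℕ → ℤ × ℤ} {L i a : ℕ} (h : IsTurn (turned p i) L i a)
    (hp : IsPrudentPath p L) : IsPrudentCorner (stepWord p a) := by
  obtain ⟨s, hs⟩ : IsExtremal (fun t => (p t).1) a := by
    by_cases hi : Even i
    · simpa [turned, hi] using h.isExtremal_fst
    · simpa [turned, hi] using h.isExtremal_snd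
  obtain ⟨s', hs'⟩ : IsExtremal (fun t => (p t).2) a := by
    by_cases hi : Even i
    · simpa [turned, hi] using h.isExtremal_snd
    · simpa [turned, hi] using h.isExtremal_fst
  refine ⟨isPrudent_stepWord_iff.mpr fun i hi => hp i (hi.trans_le h.le),
    MulEquiv.prodUnits.symm (s, s'), ?_⟩
  refine (endsAtMax_map_iff (DistribSMul.toAddMonoidHom (ℤ × ℤ) _)).mpr ?_
  rw [visited_stepWord, sum_stepWord, forall_mem_image]
  intro j hj
  simpa [Prod.le_def, mul_sub] using ⟨hs j hj, hs' j hj⟩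

theorem IsTurn.isPartiallyDirected_stepWord {p : ℕ → ℤ × ℤ} {L i a : ℕ}
    (h : IsTurn (turned p i) L i a) (hp : IsPrudentPath p L)
    (hold : ∀ t, a ≤ t → t < L → ¬ IsNewValue (fun t => (turned p i t).2) t) :
    IsPartiallyDirected (stepWord (fun t => p (a + t)) (L - a)) := by
  have hchain := (isPrudent_stepWord_iff.mpr hp).isChain
  rw [← Nat.add_sub_cancel' h.le, stepWord_add] at hchain
  refine ⟨hchain.left_of_append, ?_⟩
  rcases h.le.eq_or_lt with rfl | haL
  · exact ⟨(1, 0), .inl rfl, by simp [stepWord]⟩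
  have hq := hp.turned i
  obtain ⟨s, hs⟩ := hq.exists_forall_lt_and_sub_ne le_rfl haL
    (h.isNewValue_fst hq haL (hold a le_rfl haL)) hold
  refine ⟨if Even i then (-(s : ℤ), 0) else (0, -(s : ℤ)), ?_, fun hmem => ?_⟩
  · rcases Int.units_eq_one_or s with rfl | rfl <;> by_cases hi : Even i <;> simp [IsStep, hi]
  · obtain ⟨t, ht, hd⟩ := (mem_stepWord _).mp hmem
    refine (hs (a + t) (by omega) (by omega)).2 ?_
    by_cases hi : Even i
    · simpa [turned, hi, add_assoc] using hd
    · simpa [turned, hi, add_assoc, Prod.ext_iff, and_comm] using hd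

theorem card_image_Iic_lt_iff_isNewValue {L : ℕ} (f : Fin (L + 1) → ℤ) {t : ℕ} (ht : t < L) :
    ((Finset.Iic (⟨min t L, by omega⟩ : Fin (L + 1))).image f).card <
        ((Finset.Iic (⟨min (t + 1) L, by omega⟩ : Fin (L + 1))).image f).card ↔
      IsNewValue (fun t => f ⟨min t L, by omega⟩) t := by
  have hIic : Finset.Iic (⟨min (t + 1) L, by omega⟩ : Fin (L + 1)) =
      insert ⟨min (t + 1) L, by omega⟩ (Finset.Iic ⟨min t L, by omega⟩) := by
    ext j
    simp only [Finset.mem_Iic, Finset.mem_insert, Fin.le_def, Fin.ext_iff]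
    omega
  have hnew : IsNewValue (fun t => f ⟨min t L, by omega⟩) t ↔
      f ⟨min (t + 1) L, by omega⟩ ∉ (Finset.Iic (⟨min t L, by omega⟩ : Fin (L + 1))).image f := by
    simp only [IsNewValue, Finset.mem_image, Finset.mem_Iic, Fin.le_def, not_exists, not_and]
    refine ⟨fun h j hj => ?_, fun h i hi => h _ (min_le_min_right L hi)⟩
    simpa only [min_eq_left j.is_le] using h j (hj.trans (min_le_left t L))
  rw [hnew, hIic, Finset.image_insert, Finset.card_insert_eq_ite]
  split_ifs with hmem <;> simp [hmem]

theorem rangeSize_lt_iff_isNewValue {L : ℕ} (π : Fin (L + 1) → ℤ × ℤ) (i : ℕ) {t : ℕ}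
    (ht : t < L) :
    (if Even i then heightAt L π else widthAt L π) t <
        (if Even i then heightAt L π else widthAt L π) (t + 1) ↔
      IsNewValue (fun t => (turned (pathAt π) i t).2) t := by
  by_cases hi : Even i
  · simp only [turned, hi, if_true]
    exact card_image_Iic_lt_iff_isNewValue (fun j => (π j).2) ht
  · simp only [turned, hi, if_false]
    exact card_image_Iic_lt_iff_isNewValue (fun j => (π j).1) ht

theorem nextTime_eq_some {L : ℕ} {f : ℕ → ℕ} {a b : ℕ} (h : nextTime L f a = some b) :
    a ≤ b ∧ b < L ∧ f b < f (b + 1) ∧ ∀ t, a ≤ t → t < b → ¬ f t < f (t + 1) := by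
  classical
  obtain ⟨hex, hb⟩ := Option.dite_none_right_eq_some.mp h
  obtain ⟨haT, hTL, hT⟩ := Nat.find_spec hex
  have hfind : Nat.find hex = b + 1 := by
    have := Option.some.inj hb
    omega
  rw [hfind] at haT hTL hT
  refine ⟨by omega, hTL, hT, fun t hat htb hlt => ?_⟩
  exact Nat.find_min hex (m := t + 1) (by omega) ⟨by omega, by omega, hlt⟩

theorem nextTime_eq_none {L : ℕ} {f : ℕ → ℕ} {a : ℕ} (h : nextTime L f a = none) (t : ℕ)
    (hat : a ≤ t) (htL : t < L) : ¬ f t < f (t + 1) := by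
  classical
  intro hlt
  have hex : ∃ t, a < t ∧ t ≤ L ∧ f (t - 1) < f t := ⟨t + 1, by omega, htL, hlt⟩
  simp [nextTime, hex] at h

section ExcTime

variable {L : ℕ} {π : Fin (L + 1) → ℤ × ℤ}

theorem isTurn_of_excTime_eq_some (hπ : IsPrudentPath (pathAt π) L) {i a : ℕ}
    (ha : excTime L π i = some a) : IsTurn (turned (pathAt π) i) L i a := by
  induction i generalizing a with
  | zero =>
    obtain rfl : 0 = a := Option.some.inj ha
    exact ⟨L.zero_le, Nat.zero_le _, isExtremal_zero _, isExtremal_zero _, .inl ⟨rfl, rfl⟩⟩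
  | succ i ih =>
    obtain ⟨b, hb, hab⟩ := Option.bind_eq_some_iff.mp ha
    obtain ⟨hba, haL, hnew, hold⟩ := nextTime_eq_some hab
    rw [turned_succ]
    refine (ih hb).next (hπ.turned i) hba haL ((rangeSize_lt_iff_isNewValue π i haL).mp hnew)
      fun t hbt hta => ?_
    rw [← rangeSize_lt_iff_isNewValue π i (hta.trans haL)]
    exact hold t hbt hta

theorem exists_excTime_lastIdx_eq_some (hπ : IsPrudentPath (pathAt π) L) :
    ∃ a, excTime L π (lastIdx L π) = some a ∧
      ∀ t, a ≤ t → t < L → ¬ IsNewValue (fun t => (turned (pathAt π) (lastIdx L π) t).2) t := by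
  have hbdd : BddAbove {i | (excTime L π i).isSome} := by
    refine ⟨L + 1, fun i hi => ?_⟩
    obtain ⟨a, ha⟩ := Option.isSome_iff_exists.mp hi
    have hturn := isTurn_of_excTime_eq_some hπ ha
    have := hturn.index_le
    have := hturn.le
    omega
  have hne : {i | (excTime L π i).isSome}.Nonempty := ⟨0, rfl⟩
  obtain ⟨a, ha⟩ := Option.isSome_iff_exists.mp (Nat.sSup_mem hne hbdd)
  refine ⟨a, ha, fun t hat htL => ?_⟩
  rw [← rangeSize_lt_iff_isNewValue π _ htL]
  refine nextTime_eq_none (Option.not_isSome_iff_eq_none.mp fun hsome => ?_) t hat htL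
  refine (lastIdx L π).not_succ_le_self (le_csSup hbdd ?_)
  change ((excTime L π (lastIdx L π)).bind _).isSome
  rwa [show excTime L π (lastIdx L π) = some a from ha]

theorem excEnd_le_sum_excLen (j : ℕ) :
    excEnd L π j ≤ ∑ i ∈ Finset.Icc 1 j, excLen L π i := by
  induction j with
  | zero => rfl
  | succ j ih =>
    rw [Finset.sum_Icc_succ_top (Nat.le_add_left 1 j), excLen, Nat.add_sub_cancel]
    omega

theorem exists_isPrudentCorner_isPartiallyDirected (hπ : IsPrudentPath (pathAt π) L) :
    ∃ a ≤ L, a ≤ ∑ i ∈ Finset.Icc 1 (numExc L π), excLen L π i ∧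
      IsPrudentCorner (stepWord (pathAt π) a) ∧
      IsPartiallyDirected (stepWord (fun t => pathAt π (a + t)) (L - a)) := by
  obtain ⟨a, ha, hold⟩ := exists_excTime_lastIdx_eq_some hπ
  have hturn := isTurn_of_excTime_eq_some hπ ha
  refine ⟨a, hturn.le, ?_, hturn.isPrudentCorner_stepWord hπ,
    hturn.isPartiallyDirected_stepWord hπ hold⟩
  calc a = excEnd L π (lastIdx L π) := by rw [excEnd, ha, Option.getD_some]
    _ ≤ ∑ i ∈ Finset.Icc 1 (lastIdx L π), excLen L π i := excEnd_le_sum_excLen _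
    _ ≤ ∑ i ∈ Finset.Icc 1 (numExc L π), excLen L π i :=
      Finset.sum_le_sum_of_subset (Finset.Icc_subset_Icc_right (Nat.le_add_right _ _))

end ExcTime

end Excursions

section TailBound

theorem ncard_tail_le (L N : ℕ) :
    ({π | N ≤ L - ∑ i ∈ Finset.Icc 1 (numExc L π), excLen L π i} ∩ prudentSet L).ncard ≤
      ∑ n ∈ Finset.Ico N (L + 1),
        (stepWords IsPartiallyDirected n).card * (stepWords IsPrudentCorner (L - n)).card := by
  classical
  have hcard : ({π | N ≤ L - ∑ i ∈ Finset.Icc 1 (numExc L π), excLen L π i} ∩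
      prudentSet L).ncard ≤ ((Finset.Ico N (L + 1)).biUnion fun n =>
        (stepWords IsPartiallyDirected n ×ˢ stepWords IsPrudentCorner (L - n)).image
          fun q => q.1 ++ q.2).card := by
    rw [← ncard_coe_finset]
    refine ncard_le_ncard_of_injOn (fun π => stepWord (pathAt π) L) ?_
      ((bijOn_stepWord L).injOn.mono inter_subset_right) (Finset.finite_toSet _)
    rintro π ⟨hN, hmem⟩
    have hπ := (mem_prudentSet_iff.mp hmem).2
    have hstep := (isPrudent_stepWord_iff.mpr hπ).isStep
    obtain ⟨a, haL, hsum, hcorner, hpd⟩ := exists_isPrudentCorner_isPartiallyDirected hπ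
    have hsplit : stepWord (pathAt π) L =
        stepWord (fun t => pathAt π (a + t)) (L - a) ++ stepWord (pathAt π) a := by
      rw [← stepWord_add, Nat.add_sub_cancel' haL]
    rw [hsplit] at hstep
    refine Finset.mem_coe.mpr (Finset.mem_biUnion.mpr ⟨L - a, ?_, ?_⟩)
    · have hN : N ≤ L - ∑ i ∈ Finset.Icc 1 (numExc L π), excLen L π i := hN
      exact Finset.mem_Ico.mpr ⟨by omega, by omega⟩
    · refine Finset.mem_image.mpr ⟨(_, _), Finset.mem_product.mpr ⟨?_, ?_⟩, hsplit.symm⟩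
      · exact mem_stepWords.mpr
          ⟨length_stepWord _ _, fun d hd => hstep d (List.mem_append_left _ hd), hpd⟩
      · exact mem_stepWords.mpr ⟨(length_stepWord _ _).trans (Nat.sub_sub_self haL).symm,
          hcorner.1.isStep, hcorner⟩
  refine hcard.trans (Finset.card_biUnion_le.trans (Finset.sum_le_sum fun n _ => ?_))
  exact Finset.card_image_le.trans_eq (Finset.card_product _ _)

theorem exists_card_mul_card_le : ∃ C q : ℝ, 0 ≤ C ∧ 0 ≤ q ∧ q < 1 ∧ ∀ L n : ℕ, n ≤ L →
    ((stepWords IsPartiallyDirected n).card * (stepWords IsPrudentCorner (L - n)).card : ℝ) ≤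
      C * q ^ n * (prudentSet L).ncard := by
  obtain ⟨c, σ, hc, hσ, hext⟩ := exists_pow_le_card_stepWords_isCornerExtension
  have hμ := pdGrowth_pos
  have hσ0 := hμ.trans hσ
  refine ⟨4 * √2 / c, pdGrowth / σ, by positivity, by positivity, (div_lt_one hσ0).mpr hσ,
    fun L n hn => ?_⟩
  have hpd : ((stepWords IsPartiallyDirected n).card : ℝ) ≤ 4 * (√2 * pdGrowth ^ n) :=
    (mod_cast card_isPartiallyDirected_le n :
      ((stepWords IsPartiallyDirected n).card : ℝ) ≤ 4 * (pdWords n).card).trans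
        (mul_le_mul_of_nonneg_left (card_pdWords_le n) (by norm_num))
  have hcorner : ((stepWords IsPrudentCorner (L - n)).card : ℝ) * (c * σ ^ n) ≤
      (prudentSet L).ncard := by
    have hmul := card_isPrudentCorner_mul_card_isCornerExtension_le (L - n) n
    rw [Nat.sub_add_cancel hn, ← ncard_prudentSet] at hmul
    exact (mul_le_mul_of_nonneg_left (hext n) (Nat.cast_nonneg _)).trans (mod_cast hmul)
  calc ((stepWords IsPartiallyDirected n).card * (stepWords IsPrudentCorner (L - n)).card : ℝ)
      ≤ 4 * (√2 * pdGrowth ^ n) * ((prudentSet L).ncard / (c * σ ^ n)) :=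
        mul_le_mul hpd ((le_div_iff₀ (by positivity)).mpr hcorner) (Nat.cast_nonneg _)
          (by positivity)
    _ = 4 * √2 / c * (pdGrowth / σ) ^ n * (prudentSet L).ncard := by
        rw [div_pow]; field_simp

theorem exists_probUnif_tail_le : ∃ C q : ℝ, 0 ≤ q ∧ q < 1 ∧ ∀ L N : ℕ,
    probUnif L {π | N ≤ L - ∑ i ∈ Finset.Icc 1 (numExc L π), excLen L π i} ≤ C * q ^ N := by
  obtain ⟨C, q, hC, hq0, hq1, hle⟩ := exists_card_mul_card_le
  have hq : 0 < 1 - q := sub_pos.mpr hq1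
  refine ⟨C / (1 - q), q, hq0, hq1, fun L N => ?_⟩
  refine div_le_of_le_mul₀ (Nat.cast_nonneg _)
    (mul_nonneg (div_nonneg hC hq.le) (pow_nonneg hq0 N)) ?_
  rw [Nat.card_coe_set_eq, Nat.card_coe_set_eq]
  calc (({π | N ≤ L - ∑ i ∈ Finset.Icc 1 (numExc L π), excLen L π i} ∩
        prudentSet L).ncard : ℝ)
      ≤ ∑ n ∈ Finset.Ico N (L + 1), ((stepWords IsPartiallyDirected n).card *
          (stepWords IsPrudentCorner (L - n)).card : ℝ) := mod_cast ncard_tail_le L N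
    _ ≤ ∑ n ∈ Finset.Ico N (L + 1), C * q ^ n * (prudentSet L).ncard :=
        Finset.sum_le_sum fun n hn => hle L n (Nat.lt_succ_iff.mp (Finset.mem_Ico.mp hn).2)
    _ = C * (∑ n ∈ Finset.Ico N (L + 1), q ^ n) * (prudentSet L).ncard := by
        rw [← Finset.sum_mul, Finset.mul_sum]
    _ ≤ C * (q ^ N / (1 - q)) * (prudentSet L).ncard := by
        gcongr
        exact geom_sum_Ico_le_of_lt_one hq0 hq1
    _ = C / (1 - q) * q ^ N * (prudentSet L).ncard := by ring

theorem probUnif_mono {L : ℕ} {A B : Set (Fin (L + 1) → ℤ × ℤ)} (h : A ⊆ B) :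
    probUnif L A ≤ probUnif L B := by
  have hfin : (prudentSet L).Finite :=
    (bijOn_stepWord L).finite_iff_finite.mpr (Finset.finite_toSet _)
  refine div_le_div_of_nonneg_right (Nat.cast_le.mpr ?_) (Nat.cast_nonneg _)
  exact Nat.card_mono (hfin.subset inter_subset_right) (inter_subset_inter_left _ h)

end TailBound

theorem last_incomplete_excursion_short_general {u : ℕ → ℝ} (hu : Tendsto u atTop atTop) :
    Tendsto (fun L : ℕ =>
        probUnif L {π |
          u L ≤ (L : ℝ) - ((∑ i ∈ Finset.Icc 1 (numExc L π), excLen L π i : ℕ) : ℝ)})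
      atTop (nhds 0) := by
  obtain ⟨C, q, hq0, hq1, htail⟩ := exists_probUnif_tail_le
  have hlim : Tendsto (fun L => C * q ^ ⌈u L⌉₊) atTop (nhds 0) := by
    simpa using ((tendsto_pow_atTop_nhds_zero_of_lt_one hq0 hq1).comp
      (tendsto_nat_ceil_atTop.comp hu)).const_mul C
  refine squeeze_zero (fun L => by unfold probUnif; positivity) (fun L => ?_) hlim
  refine (probUnif_mono fun π hπ => Nat.ceil_le.mpr (hπ.trans ?_)).trans (htail L _)
  exact sub_le_iff_le_add.mpr (mod_cast le_tsub_add)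

/-- **The final incomplete excursion is short:** there is `α > 0` such that with
`P_{unif,L}`-probability tending to `1`, the length `L − (T_1 + ⋯ + T_{γ_L})` of the final
incomplete excursion is less than `α log L`. -/
theorem last_incomplete_excursion_short :
    ∃ α : ℝ, 0 < α ∧
      Tendsto (fun L : ℕ =>
          probUnif L {π |
            α * Real.log L ≤
              (L : ℝ) - ((∑ i ∈ Finset.Icc 1 (numExc L π), excLen L π i : ℕ) : ℝ)})
        atTop (nhds 0) :=
  ⟨1, one_pos, last_incomplete_excursion_short_general <|
    (Real.tendsto_log_atTop.comp tendsto_natCast_atTop_atTop).const_mul_atTop one_pos⟩
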